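/- Let $U$ be a noetherian scheme and let $p : \mathcal{A} \to U$ be an abelian scheme, that is, a group scheme over $U$ whose structure morphism $p$ is smooth and proper with geometrically connected fibers. Let $\alpha : \mathcal{A} \times_U \mathcal{A} \to \mathcal{A}$ be its addition and $0_p : U \to \mathcal{A}$ its zero-section. Let $X$ be a closed subscheme of $\mathcal{A}$ such that $\alpha(X \times_U X) \subseteq X$ and $0_p(U) \subseteq X$, meaning that the restriction of $\alpha$ to $X \times_U X$ and the morphism $0_p$ both factor through the inclusion $X \hookrightarrow \mathcal{A}$. Then $-X = X$ as closed subschemes of $\mathcal{A}$, where $-X$ is the image of $X$ under the inversion morphism of $\mathcal{A}$. Consequently $p|_X : X \to U$ is a closed subgroup scheme of $p$, i.e. $\alpha(X \times_U X) \subseteq X$, $0_p(U) \subseteq X$ and $-X = X$. -/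

import Mathlib

open CategoryTheory Limits MonoidalCategory CartesianMonoidalCategory MonObj AlgebraicGeometry

universe u

/-- A group scheme `A` over `U` (a group object of the category of `U`-schemes, whose product is
the fiber product over `U`) is an abelian scheme if its structure morphism `p = A.hom` is smooth and
proper and has geometrically connected fibers. The group laws are part of `GrpObj A`. -/
class IsAbelianScheme {U : Scheme.{u}} (A : Over U) [GrpObj A] : Prop where
  smooth : Smooth A.hom
  proper : IsProper A.hom
  geometricallyConnected : GeometricallyConnected A.hom

namespace GroupScheme

variable {U : Scheme.{u}} {A : Over U}

/-- The closed subscheme `X` of `A` cut out by the quasi-coherent sheaf of ideals `X`, seen as a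
`U`-scheme through the restriction `p|_X : X ⟶ U` of the structure morphism `p` of `A`. -/
noncomputable abbrev sub (X : A.left.IdealSheafData) : Over U :=
  Over.mk (X.subschemeι ≫ A.hom)

/-- The inclusion `X ⟶ A` as a morphism of `U`-schemes. -/
noncomputable abbrev incl (X : A.left.IdealSheafData) : sub X ⟶ A :=
  Over.homMk X.subschemeι

/-- The (scheme-theoretic) image of a morphism of `U`-schemes `f : T ⟶ A` is contained in `X`:
`f` factors through the inclusion of `X` into `A`. -/
def MapsInto {T : Over U} (f : T ⟶ A) (X : A.left.IdealSheafData) : Prop :=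
  ∃ g : T ⟶ sub X, g ≫ incl X = f

variable [GrpObj A]

/-- `α(X ×_U X) ⊆ X`, for the group law `α = μ : A ×_U A ⟶ A`. -/
def AddClosed (X : A.left.IdealSheafData) : Prop :=
  MapsInto ((incl X ⊗ₘ incl X) ≫ μ[A]) X

/-- `0_p(U) ⊆ X`, for the zero-section `0_p = η : U ⟶ A`. -/
def ContainsZero (X : A.left.IdealSheafData) : Prop :=
  MapsInto η[A] X

/-- `-X`, the scheme-theoretic image of `X` under the inversion morphism `ι : A ⟶ A`, that is, the
closed subscheme cut out by the kernel of the composite `X ⟶ A ⟶ A`. -/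
noncomputable def negSub (X : A.left.IdealSheafData) : A.left.IdealSheafData :=
  X.map (GrpObj.inv (X := A)).left

/-- `p|_X : X ⟶ U` is a closed subgroup scheme of the group scheme `p : A ⟶ U`. -/
structure IsClosedSubgroupScheme (X : A.left.IdealSheafData) : Prop where
  add_closed : AddClosed X
  contains_zero : ContainsZero X
  neg_eq : negSub X = X

end GroupScheme

/-!
The shear `(x, y) ↦ (x, x + y)` is an automorphism of `A ×_U A`, so its restriction to `X ×_U X` is
a closed immersion of `X ×_U X` into itself. Over an affine open of `U` this is a closed immersion
of a noetherian scheme into itself, hence an isomorphism, because the increasing chain of the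
kernels of its powers is stationary. So `(x, 0)` is the image of some `(x, y)` in `X ×_U X`, and
`y = -x`.
-/

namespace GroupScheme

section Shear

variable {C : Type*} [Category C] [CartesianMonoidalCategory C]

/-- The shear `(x, y) ↦ (x, m (x, y))` of a binary operation `m` on `M`. For a group law it is
invertible, and its invertibility is what provides inverses for the operation that a group induces
on a subobject. -/
def shear {M : C} (m : M ⊗ M ⟶ M) : M ⊗ M ⟶ M ⊗ M :=
  lift (fst M M) m

theorem shear_fst {M : C} (m : M ⊗ M ⟶ M) : shear m ≫ fst M M = fst M M :=
  lift_fst _ _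

theorem shear_snd {M : C} (m : M ⊗ M ⟶ M) : shear m ≫ snd M M = m :=
  lift_snd _ _

theorem shear_comp_tensorHom {M N : C} {m : M ⊗ M ⟶ M} {n : N ⊗ N ⟶ N} {i : M ⟶ N}
    (hm : m ≫ i = (i ⊗ₘ i) ≫ n) : shear m ≫ (i ⊗ₘ i) = (i ⊗ₘ i) ≫ shear n := by
  ext1 <;> simp [shear, hm]

variable {G : C} [GrpObj G]

instance isIso_shear_mul : IsIso (shear μ[G]) := by
  refine ⟨shear (lift (fst G G ≫ ι) (snd G G) ≫ μ), ?_, ?_⟩ <;> ext1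
  · simp [shear]
  · simpa [shear, comp_lift_assoc] using
      ((GrpObj.eq_lift_inv_left (snd G G) (fst G G) μ).mpr (by simp)).symm
  · simp [shear]
  · simpa [shear] using (GrpObj.eq_lift_inv_left _ (fst G G) (snd G G)).mp rfl

theorem exists_comp_eq_comp_inv_of_isIso_shear {M : C} {i : M ⟶ G} {m : M ⊗ M ⟶ M} {e : 𝟙_ C ⟶ M}
    (hm : m ≫ i = (i ⊗ₘ i) ≫ μ) (he : e ≫ i = η) [IsIso (shear m)] :
    ∃ n : M ⟶ M, n ≫ i = i ≫ ι := by
  let y : M ⟶ M ⊗ M := lift (𝟙 M) (toUnit M ≫ e) ≫ inv (shear m)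
  have y_shear : y ≫ shear m = lift (𝟙 M) (toUnit M ≫ e) := by simp [y]
  have y_fst : y ≫ fst M M = 𝟙 M := by
    rw [← shear_fst m, reassoc_of% y_shear, lift_fst]
  have y_mul : y ≫ m = toUnit M ≫ e := by
    rw [← shear_snd m, reassoc_of% y_shear, lift_snd]
  have mul_eq_one : lift i ((y ≫ snd M M) ≫ i) ≫ μ = toUnit M ≫ η[G] := calc
    _ = (y ≫ (i ⊗ₘ i)) ≫ μ := by congr 1; ext1 <;> simp [reassoc_of% y_fst]
    _ = toUnit M ≫ η[G] := by rw [Category.assoc, ← hm, reassoc_of% y_mul, he]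
  exact ⟨y ≫ snd M M, by
    rw [(GrpObj.eq_lift_inv_left _ _ _).mpr mul_eq_one, MonObj.lift_comp_one_right]⟩

end Shear

section ClosedImmersion

instance wellFoundedGT_idealSheafData (Z : Scheme.{u}) [AlgebraicGeometry.IsNoetherian Z] :
    WellFoundedGT Z.IdealSheafData := by
  obtain ⟨s, hs, hsZ⟩ :=
    (isCompact_iff_finite_and_eq_biUnion_affineOpens (X := Z) (U := ⊤)).mp isCompact_univ
  have := hs.to_subtype
  have cover : ⨆ V : s, V.1.1 = ⊤ := by rw [hsZ, iSup_subtype]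
  have (V : s) : IsNoetherianRing Γ(Z, V.1.1) := IsLocallyNoetherian.component_noetherian _
  let ideals (I : Z.IdealSheafData) (V : s) : (Ideal Γ(Z, V.1.1))ᵒᵈ :=
    OrderDual.toDual (I.ideal V)
  have ideals_strictAnti : StrictAnti ideals :=
    Antitone.strictAnti_of_injective (fun _ _ h V ↦ h V) fun _ _ h ↦
      Scheme.IdealSheafData.ext_of_iSup_eq_top _ cover (congrFun h)
  exact ideals_strictAnti.wellFoundedGT

theorem isIso_of_isClosedImmersion_of_isNoetherian {Z : Scheme.{u}}
    [AlgebraicGeometry.IsNoetherian Z] (f : Z ⟶ Z) [IsClosedImmersion f] : IsIso f := by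
  let iter (n : ℕ) : Z ⟶ Z := (f ≫ ·)^[n] (𝟙 Z)
  have iter_succ (n : ℕ) : iter (n + 1) = f ≫ iter n := Function.iterate_succ_apply' _ _ _
  have (n : ℕ) : IsClosedImmersion (iter n) := by
    induction n with
    | zero => exact inferInstanceAs (IsClosedImmersion (𝟙 Z))
    | succ n ih => rw [iter_succ]; infer_instance
  have ker_mono : Monotone fun n ↦ (iter n).ker :=
    monotone_nat_of_le_succ fun n ↦ by rw [iter_succ]; exact Scheme.Hom.le_ker_comp _ _
  obtain ⟨n, hn⟩ := WellFoundedGT.monotone_chain_condition ⟨_, ker_mono⟩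
  exact IsClosedImmersion.isIso_of_ker_eq (iter (n + 1)) (iter n) f (iter_succ n).symm
    (hn (n + 1) n.le_succ).symm

variable {U : Scheme.{u}}

theorem isIso_of_isClosedImmersion_of_comp_eq [IsLocallyNoetherian U] {Z : Scheme.{u}}
    (p : Z ⟶ U) [LocallyOfFiniteType p] [QuasiCompact p] (f : Z ⟶ Z) [IsClosedImmersion f]
    (hf : f ≫ p = p) : IsIso f := by
  refine IsZariskiLocalAtTarget.of_forall_exists_morphismRestrict (P := .isomorphisms Scheme)
    fun z ↦ ?_
  obtain ⟨V, hV, hzV, -⟩ := exists_isAffineOpen_mem_and_subset (x := p z) (U := ⊤) trivial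
  refine ⟨p ⁻¹ᵁ V, hzV, ?_⟩
  have preimage_eq : f ⁻¹ᵁ p ⁻¹ᵁ V = p ⁻¹ᵁ V := by rw [← Scheme.Hom.comp_preimage, hf]
  have : IsLocallyNoetherian Z := LocallyOfFiniteType.isLocallyNoetherian p
  have : CompactSpace (p ⁻¹ᵁ V) :=
    isCompact_iff_compactSpace.mp (p.isCompact_preimage hV.isCompact)
  have : AlgebraicGeometry.IsNoetherian (p ⁻¹ᵁ V) := {}
  have : IsClosedImmersion (f ∣_ p ⁻¹ᵁ V) := IsZariskiLocalAtTarget.restrict ‹_› _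
  have := isIso_of_isClosedImmersion_of_isNoetherian
    ((Z.isoOfEq preimage_eq).inv ≫ f ∣_ p ⁻¹ᵁ V)
  exact IsIso.of_isIso_comp_left (Z.isoOfEq preimage_eq).inv _

theorem isClosedImmersion_tensorHom_left {R S T V : Over U} (f : R ⟶ S) (g : T ⟶ V)
    [IsClosedImmersion f.left] [IsClosedImmersion g.left] :
    IsClosedImmersion (f ⊗ₘ g).left := by
  rw [Over.tensorHom_left]
  have : MorphismProperty.IsStableUnderComposition @IsClosedImmersion.{u} :=
    MorphismProperty.IsMultiplicative.toIsStableUnderComposition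
  exact MorphismProperty.pullbackMap (P := @IsClosedImmersion) ‹_› ‹_› (Over.w f).symm
    (Over.w g).symm

variable {A : Over U} [GrpObj A] {Y : Over U} {i : Y ⟶ A} [IsClosedImmersion i.left]
  {m : Y ⊗ Y ⟶ Y}

theorem isClosedImmersion_shear_left (hm : m ≫ i = (i ⊗ₘ i) ≫ μ) :
    IsClosedImmersion (shear m).left := by
  have := isClosedImmersion_tensorHom_left i i
  have : IsIso (shear μ[A]).left := inferInstanceAs (IsIso ((Over.forget U).map (shear μ[A])))
  have : IsClosedImmersion ((shear m).left ≫ (i ⊗ₘ i).left) := by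
    rw [← Over.comp_left, shear_comp_tensorHom hm, Over.comp_left]
    infer_instance
  exact IsClosedImmersion.of_comp_isClosedImmersion _ (i ⊗ₘ i).left

theorem isIso_shear_of_isClosedImmersion [IsLocallyNoetherian U] [LocallyOfFiniteType Y.hom]
    [QuasiCompact Y.hom] (hm : m ≫ i = (i ⊗ₘ i) ≫ μ) : IsIso (shear m) := by
  have : LocallyOfFiniteType (Y ⊗ Y).hom := by rw [Over.tensorObj_hom]; infer_instance
  have : QuasiCompact (Y ⊗ Y).hom := by rw [Over.tensorObj_hom]; infer_instance
  have := isClosedImmersion_shear_left hm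
  have : IsIso ((Over.forget U).map (shear m)) :=
    isIso_of_isClosedImmersion_of_comp_eq (Y ⊗ Y).hom (shear m).left (Over.w _)
  exact isIso_of_reflects_iso (shear m) (Over.forget U)

end ClosedImmersion

section ClosedSubscheme

variable {U : Scheme.{u}} {A : Over U} {X : A.left.IdealSheafData}

instance locallyOfFiniteType_sub_hom [LocallyOfFiniteType A.hom] :
    LocallyOfFiniteType (sub X).hom :=
  inferInstanceAs (LocallyOfFiniteType (X.subschemeι ≫ A.hom))

instance quasiCompact_sub_hom [QuasiCompact A.hom] : QuasiCompact (sub X).hom :=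
  inferInstanceAs (QuasiCompact (X.subschemeι ≫ A.hom))

variable [GrpObj A]

theorem mapsInto_inv_of_addClosed [IsLocallyNoetherian U] [LocallyOfFiniteType (sub X).hom]
    [QuasiCompact (sub X).hom] (hadd : AddClosed X) (hzero : ContainsZero X) :
    MapsInto (incl X ≫ ι) X := by
  obtain ⟨m, hm⟩ := hadd
  obtain ⟨e, he⟩ := hzero
  have : IsClosedImmersion (incl X).left := inferInstanceAs (IsClosedImmersion X.subschemeι)
  have := isIso_shear_of_isClosedImmersion hm
  exact exists_comp_eq_comp_inv_of_isIso_shear hm he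

theorem negSub_negSub (X : A.left.IdealSheafData) : negSub (negSub X) = X := by
  rw [negSub, negSub, ← Scheme.IdealSheafData.map_comp, ← Over.comp_left, GrpObj.inv_comp_inv,
    Over.id_left, Scheme.IdealSheafData.map_id]

theorem le_negSub_of_mapsInto_inv (h : MapsInto (incl X ≫ ι) X) : X ≤ negSub X := by
  obtain ⟨g, hg⟩ := h
  have left_eq : g.left ≫ X.subschemeι = X.subschemeι ≫ ι[A].left := congrArg CommaMorphism.left hg
  calc X = X.subschemeι.ker := X.ker_subschemeι.symm
    _ ≤ (g.left ≫ X.subschemeι).ker := Scheme.Hom.le_ker_comp _ _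
    _ = negSub X := by rw [left_eq]; rfl

theorem negSub_eq_self_of_mapsInto_inv (h : MapsInto (incl X ≫ ι) X) : negSub X = X := by
  have hle := le_negSub_of_mapsInto_inv h
  refine le_antisymm ?_ hle
  calc negSub X ≤ negSub (negSub X) := Scheme.IdealSheafData.map_mono _ hle
    _ = X := negSub_negSub X

end ClosedSubscheme

end GroupScheme

theorem neg_eq_self_of_add_zero_closed_general {U : Scheme.{u}} [IsLocallyNoetherian U]
    (A : Over U) [GrpObj A] (X : A.left.IdealSheafData)
    [LocallyOfFiniteType (GroupScheme.sub X).hom] [QuasiCompact (GroupScheme.sub X).hom]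
    (hadd : GroupScheme.AddClosed X) (hzero : GroupScheme.ContainsZero X) :
    GroupScheme.negSub X = X ∧ GroupScheme.IsClosedSubgroupScheme X := by
  have neg_eq : GroupScheme.negSub X = X :=
    GroupScheme.negSub_eq_self_of_mapsInto_inv (GroupScheme.mapsInto_inv_of_addClosed hadd hzero)
  exact ⟨neg_eq, hadd, hzero, neg_eq⟩

theorem neg_eq_self_of_add_zero_closed {U : Scheme.{u}} [AlgebraicGeometry.IsNoetherian U]
    (A : Over U) [GrpObj A] [IsAbelianScheme A] (X : A.left.IdealSheafData)
    (hadd : GroupScheme.AddClosed X) (hzero : GroupScheme.ContainsZero X) :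
    GroupScheme.negSub X = X ∧ GroupScheme.IsClosedSubgroupScheme X := by
  have := IsAbelianScheme.proper (A := A)
  exact neg_eq_self_of_add_zero_closed_general A X hadd hzero
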